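/- The quotient space S = Σ/∼ is homeomorphic to the 2-sphere (the unit sphere in 3-dimensional Euclidean space). -/

import Mathlib

noncomputable section

/-- The unit square `Σ = [0,1] × [0,1] ⊆ ℝ²`. -/
def Sq : Set (ℝ × ℝ) := Set.Icc (0 : ℝ) 1 ×ˢ Set.Icc (0 : ℝ) 1

/-- The (discontinuous, non-injective) horseshoe-like map
`F(x,y) = (2x, y/2)` for `x ≤ 1/2` and `F(x,y) = (2−2x, 1−y/2)` for `x > 1/2`. -/
def F : ℝ × ℝ → ℝ × ℝ :=
  fun p => if p.1 ≤ 1 / 2 then (2 * p.1, p.2 / 2) else (2 - 2 * p.1, 1 - p.2 / 2)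

/-- The set `E` of fold-segment endpoints together with the bottom-left corner:
`E = {(0,0), (1,1)} ∪ {(0, 2^{−i}) : i ≥ 0} ∪ {(2^{−i}, 0) : i ≥ 0}`. -/
def Efold : Set (ℝ × ℝ) :=
  {((0 : ℝ), (0 : ℝ)), ((1 : ℝ), (1 : ℝ))} ∪
    {q | ∃ i : ℕ, q = ((0 : ℝ), (2 : ℝ) ^ (-(i : ℤ)))} ∪
    {q | ∃ i : ℕ, q = ((2 : ℝ) ^ (-(i : ℤ)), (0 : ℝ))}

/-- The generating relation for the identifications on `Σ`:
`(x,1) ∼ (1−x,1)` for `x ∈ [0,1]`; `(1,y) ∼ (1,1−y)` for `y ∈ [0,1]`;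
`(0,y) ∼ (0, 3·2^{−i} − y)` for `i ≥ 1`, `y ∈ [2^{−i}, 2^{−i+1}]`;
`(x,0) ∼ (3·2^{−i} − x, 0)` for `i ≥ 1`, `x ∈ [2^{−i}, 2^{−i+1}]`;
and `p ∼ p′` for all `p, p′ ∈ E`. -/
def baseRel (p p' : ℝ × ℝ) : Prop :=
  (∃ x ∈ Set.Icc (0 : ℝ) 1, p = (x, (1 : ℝ)) ∧ p' = (1 - x, (1 : ℝ))) ∨
  (∃ y ∈ Set.Icc (0 : ℝ) 1, p = ((1 : ℝ), y) ∧ p' = ((1 : ℝ), 1 - y)) ∨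
  (∃ i : ℕ, 1 ≤ i ∧ ∃ y ∈ Set.Icc ((2 : ℝ) ^ (-(i : ℤ))) ((2 : ℝ) ^ (-(i : ℤ) + 1)),
      p = ((0 : ℝ), y) ∧ p' = ((0 : ℝ), 3 * (2 : ℝ) ^ (-(i : ℤ)) - y)) ∨
  (∃ i : ℕ, 1 ≤ i ∧ ∃ x ∈ Set.Icc ((2 : ℝ) ^ (-(i : ℤ))) ((2 : ℝ) ^ (-(i : ℤ) + 1)),
      p = (x, (0 : ℝ)) ∧ p' = (3 * (2 : ℝ) ^ (-(i : ℤ)) - x, (0 : ℝ))) ∨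
  (p ∈ Efold ∧ p' ∈ Efold)

/-- The smallest equivalence relation containing `baseRel` (all points related by
`baseRel` lie in `Σ`, so its restriction to `Σ` is the smallest equivalence relation
on `Σ` containing the given identifications). -/
def hsRel : ℝ × ℝ → ℝ × ℝ → Prop := Relation.EqvGen baseRel

/-- The setoid on `Σ` given by restricting `hsRel`. -/
def hsSetoid : Setoid ↥Sq :=
  ⟨fun p q => hsRel p.val q.val,
   ⟨fun _ => Relation.EqvGen.refl _, fun h => Relation.EqvGen.symm _ _ h, fun h h' => Relation.EqvGen.trans _ _ _ h h'⟩⟩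

/-- The quotient sphere `S = Σ/∼`, with the quotient topology. -/
abbrev HS : Type := Quotient hsSetoid

/-- The quotient map `π : Σ → S`. -/
def hsPi (p : ↥Sq) : HS := Quotient.mk hsSetoid p

end

/-!
Centred polar coordinates `(t, ρ)` identify the square with a rectangle whose side `ρ = 0` is
collapsed and whose sides `t = ±2` are glued, the boundary of the square being `ρ = 1`. In the
parameter `t` the identifications say that a closed set `A` is collapsed to a point and that every
bounded complementary interval of `A` is folded at its midpoint. With the height `y = ρ⁻¹ - 1` the
rectangle becomes a half-strip on the boundary of the square. Over a gap of `A` of half-width `w`,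
send the point at offset `s` from the midpoint and height `y` to height `Y = y + (w - |s|)` and
offset `s * y / Y`. Since `s * y` and `|s| - y` determine `(s, y)` with `y ≥ 0` up to the sign of
`s` when `y = 0`, this makes exactly the required identifications away from `A`, and it extends
continuously by the identity over `A`. Inverting the height sends `A` to infinity and the centre of
the square to the origin, so that the quotient is the one-point compactification of the plane.
-/

noncomputable section

namespace FoldedSquare

open Set Topology Filter

/-! ### The folding `(s, y) ↦ (s * y, |s| - y)` of the upper half-plane -/

lemma eq_or_eq_neg_of_mul_eq_of_abs_sub_eq {s s' y y' : ℝ} (hy : 0 ≤ y) (hy' : 0 ≤ y')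
    (hmul : s * y = s' * y') (hsub : |s| - y = |s'| - y') :
    (s = s' ∧ y = y') ∨ (y = 0 ∧ y' = 0 ∧ s' = -s) := by
  have habs : |s| * y = |s'| * y' := by
    rw [← abs_of_nonneg hy, ← abs_mul, hmul, abs_mul, abs_of_nonneg hy']
  have hadd : |s| + y = |s'| + y' := by
    refine (pow_left_inj₀ (by positivity) (by positivity) two_ne_zero).1 ?_
    linear_combination (|s| - y + (|s'| - y')) * hsub + 4 * habs
  obtain rfl : y = y' := by linarith
  rcases abs_eq_abs.1 (show |s| = |s'| by linarith) with rfl | rfl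
  · exact Or.inl ⟨rfl, rfl⟩
  · rcases eq_or_ne y 0 with rfl | hy0
    · exact Or.inr ⟨rfl, rfl, (neg_neg s').symm⟩
    · exact Or.inl ⟨mul_right_cancel₀ hy0 hmul, rfl⟩

lemma exists_abs_sub_eq_mul_eq (c p : ℝ) : ∃ s y : ℝ, 0 ≤ y ∧ |s| - y = c ∧ s * y = p := by
  have hsq : √(c ^ 2 + 4 * |p|) ^ 2 = c ^ 2 + 4 * |p| := Real.sq_sqrt (by positivity)
  obtain ⟨hc, hc'⟩ := abs_le.1 <| Real.abs_le_sqrt (y := c ^ 2 + 4 * |p|) (x := c) <| by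
    linarith [abs_nonneg p]
  set q := √(c ^ 2 + 4 * |p|)
  have hu : |(q + c) / 2| = (q + c) / 2 := abs_of_nonneg (by linarith)
  rcases abs_choice p with hp | hp
  · exact ⟨(q + c) / 2, (q - c) / 2, by linarith, by rw [hu]; ring, by
      linear_combination hsq / 4 + hp⟩
  · exact ⟨-((q + c) / 2), (q - c) / 2, by linarith, by rw [abs_neg, hu]; ring, by
      linear_combination -hsq / 4 - hp⟩

/-! ### Gaps of a closed set of reals -/

section Gaps

variable {A : Set ℝ} {a b l r l' r' t t' y y' X Y : ℝ}

/-- `(l, r)` is a bounded complementary interval (a *gap*) of `A`. -/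
structure IsGap (A : Set ℝ) (l r : ℝ) : Prop where
  left_mem : l ∈ A
  right_mem : r ∈ A
  lt : l < r
  notMem_of_mem_Ioo : ∀ x ∈ Ioo l r, x ∉ A

namespace IsGap

lemma isGreatest (h : IsGap A l r) (ht : t ∈ Ioo l r) : IsGreatest (A ∩ Iic t) l :=
  ⟨⟨h.left_mem, ht.1.le⟩, fun x hx ↦ by
    by_contra! hlx
    exact h.notMem_of_mem_Ioo x ⟨hlx, hx.2.trans_lt ht.2⟩ hx.1⟩

lemma isLeast (h : IsGap A l r) (ht : t ∈ Ioo l r) : IsLeast (A ∩ Ici t) r :=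
  ⟨⟨h.right_mem, ht.2.le⟩, fun x hx ↦ by
    by_contra! hxr
    exact h.notMem_of_mem_Ioo x ⟨ht.1.trans_le hx.2, hxr⟩ hx.1⟩

lemma eq_of_mem_Ioo (h : IsGap A l r) (h' : IsGap A l' r') (ht : t ∈ Ioo l r)
    (ht' : t ∈ Ioo l' r') : l = l' ∧ r = r' :=
  ⟨(h.isGreatest ht).unique (h'.isGreatest ht'), (h.isLeast ht).unique (h'.isLeast ht')⟩

lemma subset_Icc (h : IsGap A l r) (ha : a ∈ A) (hb : b ∈ A) (ht : t ∈ Ioo l r)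
    (htab : t ∈ Icc a b) : Icc l r ⊆ Icc a b :=
  Icc_subset_Icc ((h.isGreatest ht).2 ⟨ha, htab.1⟩) ((h.isLeast ht).2 ⟨hb, htab.2⟩)

lemma infDist_eq (h : IsGap A l r) (ht : t ∈ Icc l r) :
    Metric.infDist t A = (r - l) / 2 - |t - (l + r) / 2| := by
  refine le_antisymm ?_ ((Metric.le_infDist ⟨l, h.left_mem⟩).2 fun x hx ↦ ?_)
  · have hl := Metric.infDist_le_dist_of_mem (x := t) h.left_mem
    have hr := Metric.infDist_le_dist_of_mem (x := t) h.right_mem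
    rw [Real.dist_eq] at hl hr
    grind
  · have hx' : x ≤ l ∨ r ≤ x := by
      by_contra! hlr
      exact h.notMem_of_mem_Ioo x hlr hx
    rw [Real.dist_eq]
    grind

end IsGap

lemma exists_isGap_of_notMem (hA : IsClosed A) (ha : a ∈ A) (hb : b ∈ A) (ht : t ∈ Icc a b)
    (htA : t ∉ A) : ∃ l r, IsGap A l r ∧ t ∈ Ioo l r := by
  have hl := (hA.inter isClosed_Iic).isGreatest_csSup ⟨a, ha, ht.1⟩ ⟨t, fun x hx ↦ hx.2⟩
  have hr := (hA.inter isClosed_Ici).isLeast_csInf ⟨b, hb, ht.2⟩ ⟨t, fun x hx ↦ hx.2⟩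
  have hlt : sSup (A ∩ Iic t) < t := hl.1.2.lt_of_ne fun e ↦ htA (e ▸ hl.1.1)
  have htr : t < sInf (A ∩ Ici t) := hr.1.2.lt_of_ne fun e ↦ htA (e ▸ hr.1.1)
  refine ⟨_, _, ⟨hl.1.1, hr.1.1, hlt.trans htr, fun x hx hxA ↦ ?_⟩, hlt, htr⟩
  rcases le_total x t with hxt | htx
  · exact hx.1.not_ge (hl.2 ⟨hxA, hxt⟩)
  · exact hx.2.not_ge (hr.2 ⟨hxA, htx⟩)

/-- The midpoint of the gap of `A` containing `t`; it is `t` itself when `t ∈ A`. -/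
def gapMidpoint (A : Set ℝ) (t : ℝ) : ℝ := (sSup (A ∩ Iic t) + sInf (A ∩ Ici t)) / 2

lemma IsGap.gapMidpoint_eq (h : IsGap A l r) (ht : t ∈ Ioo l r) :
    gapMidpoint A t = (l + r) / 2 := by
  rw [gapMidpoint, (h.isGreatest ht).csSup_eq, (h.isLeast ht).csInf_eq]

/-- The offset of `t` from the midpoint of its gap, weighted by the distance to `A` so as to be
continuous. -/
def foldShift (A : Set ℝ) (t : ℝ) : ℝ := Metric.infDist t A * (t - gapMidpoint A t)

lemma IsGap.foldShift_eq (h : IsGap A l r) (ht : t ∈ Ioo l r) :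
    foldShift A t = Metric.infDist t A * (t - (l + r) / 2) := by
  rw [foldShift, h.gapMidpoint_eq ht]

lemma foldShift_of_mem (ht : t ∈ A) : foldShift A t = 0 := by
  rw [foldShift, Metric.infDist_zero_of_mem ht, zero_mul]

lemma abs_foldShift_le (hA : IsClosed A) (ha : a ∈ A) (hb : b ∈ A) (ht : t ∈ Icc a b) :
    |foldShift A t| ≤ Metric.infDist t A * (b - a) := by
  by_cases htA : t ∈ A
  · simp [foldShift_of_mem htA, Metric.infDist_zero_of_mem htA]
  obtain ⟨l, r, h, htlr⟩ := exists_isGap_of_notMem hA ha hb ht htA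
  have hl := h.subset_Icc ha hb htlr ht (left_mem_Icc.2 h.lt.le)
  have hr := h.subset_Icc ha hb htlr ht (right_mem_Icc.2 h.lt.le)
  rw [h.foldShift_eq htlr, abs_mul, abs_of_nonneg Metric.infDist_nonneg]
  refine mul_le_mul_of_nonneg_left (abs_le.2 ⟨?_, ?_⟩) Metric.infDist_nonneg <;>
    linarith [htlr.1, htlr.2, hl.1, hr.2]

lemma continuousOn_foldShift (hA : IsClosed A) (ha : a ∈ A) (hb : b ∈ A) :
    ContinuousOn (foldShift A) (Icc a b) := by
  intro t ht
  by_cases htA : t ∈ A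
  · have hbound : Tendsto (fun x ↦ Metric.infDist x A * (b - a)) (𝓝[Icc a b] t) (𝓝 0) := by
      have := ((Metric.continuous_infDist_pt A).mul_const (b - a)).continuousWithinAt
        (s := Icc a b) (x := t)
      simpa [ContinuousWithinAt, Metric.infDist_zero_of_mem htA] using this
    rw [ContinuousWithinAt, foldShift_of_mem htA]
    refine squeeze_zero_norm' ?_ hbound
    filter_upwards [self_mem_nhdsWithin] with x hx using abs_foldShift_le hA ha hb hx
  · obtain ⟨l, r, h, htlr⟩ := exists_isGap_of_notMem hA ha hb ht htA
    have heq : foldShift A =ᶠ[𝓝 t] fun x ↦ Metric.infDist x A * (x - (l + r) / 2) := by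
      filter_upwards [Ioo_mem_nhds htlr.1 htlr.2] with x hx using h.foldShift_eq hx
    refine (ContinuousAt.congr ?_ heq.symm).continuousWithinAt
    exact ((Metric.continuous_infDist_pt A).mul (by fun_prop)).continuousAt

/-- Over a gap of midpoint `m` and half-width `w`, a point at offset `s` from `m` and height
`y ≥ 0` is sent to height `Y = y + (w - |s|)` and offset `s * y / Y`. So `foldMap A` folds the base
of the strip onto a vertical segment, fixes the vertical sides, and fixes all points above `A`. -/
def foldMap (A : Set ℝ) (p : ℝ × ℝ) : ℝ × ℝ :=
  (p.1 - foldShift A p.1 / (p.2 + Metric.infDist p.1 A), p.2 + Metric.infDist p.1 A)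

lemma foldMap_of_mem (ht : t ∈ A) (y : ℝ) : foldMap A (t, y) = (t, y) := by
  simp [foldMap, foldShift_of_mem ht, Metric.infDist_zero_of_mem ht]

lemma foldMap_snd_nonneg (hy : 0 ≤ y) : 0 ≤ (foldMap A (t, y)).2 :=
  add_nonneg hy Metric.infDist_nonneg

namespace IsGap

lemma infDist_pos (h : IsGap A l r) (ht : t ∈ Ioo l r) : 0 < Metric.infDist t A := by
  rw [h.infDist_eq (Ioo_subset_Icc_self ht), sub_pos, abs_lt]
  constructor <;> linarith [ht.1, ht.2]

lemma foldMap_snd_pos (h : IsGap A l r) (ht : t ∈ Ioo l r) (hy : 0 ≤ y) :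
    0 < (foldMap A (t, y)).2 :=
  add_pos_of_nonneg_of_pos hy (h.infDist_pos ht)

lemma foldMap_snd_eq (h : IsGap A l r) (ht : t ∈ Ioo l r) (y : ℝ) :
    (foldMap A (t, y)).2 = y + ((r - l) / 2 - |t - (l + r) / 2|) := by
  rw [foldMap, h.infDist_eq (Ioo_subset_Icc_self ht)]

lemma foldMap_offset_mul (h : IsGap A l r) (ht : t ∈ Ioo l r) (hy : 0 ≤ y) :
    ((foldMap A (t, y)).1 - (l + r) / 2) * (foldMap A (t, y)).2 = (t - (l + r) / 2) * y := by
  have hY : y + Metric.infDist t A ≠ 0 := (h.foldMap_snd_pos ht hy).ne'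
  simp only [foldMap, h.foldShift_eq ht]
  field_simp
  ring

lemma foldMap_fst_mem_Ioo (h : IsGap A l r) (ht : t ∈ Ioo l r) (hy : 0 ≤ y) :
    (foldMap A (t, y)).1 ∈ Ioo l r := by
  have hY := h.foldMap_snd_pos ht hy
  have hle : y ≤ (foldMap A (t, y)).2 := le_add_of_nonneg_right Metric.infDist_nonneg
  have hmul := h.foldMap_offset_mul ht hy
  generalize foldMap A (t, y) = P at *
  constructor <;> nlinarith [ht.1, ht.2]

lemma foldMap_eq_iff (h : IsGap A l r) (ht : t ∈ Ioo l r) (ht' : t' ∈ Ioo l r) (hy : 0 ≤ y)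
    (hy' : 0 ≤ y') : foldMap A (t, y) = foldMap A (t', y') ↔
      (t = t' ∧ y = y') ∨ (y = 0 ∧ y' = 0 ∧ t' = l + r - t) := by
  have hmul := h.foldMap_offset_mul ht hy
  have hmul' := h.foldMap_offset_mul ht' hy'
  have hsnd := h.foldMap_snd_eq ht y
  have hsnd' := h.foldMap_snd_eq ht' y'
  have hpos := h.foldMap_snd_pos ht hy
  have hpos' := h.foldMap_snd_pos ht' hy'
  constructor
  · intro heq
    rw [heq, hmul'] at hmul
    rw [heq, hsnd'] at hsnd
    refine (eq_or_eq_neg_of_mul_eq_of_abs_sub_eq hy hy' hmul.symm (by linarith)).imp ?_ ?_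
    · exact fun ⟨hs, hyy'⟩ ↦ ⟨sub_left_injective hs, hyy'⟩
    · exact fun ⟨h0, h0', hs⟩ ↦ ⟨h0, h0', by linarith [hs]⟩
  · rintro (⟨rfl, rfl⟩ | ⟨rfl, rfl, rfl⟩)
    · rfl
    · have habs : |l + r - t - (l + r) / 2| = |t - (l + r) / 2| := by
        rw [← abs_neg]
        ring_nf
      rw [mul_zero, mul_eq_zero_iff_right (by positivity)] at hmul hmul'
      exact Prod.ext (by linarith) (by linarith)

end IsGap

lemma foldMap_snd_eq_zero_iff (hA : IsClosed A) (hne : A.Nonempty) (hy : 0 ≤ y) :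
    (foldMap A (t, y)).2 = 0 ↔ y = 0 ∧ t ∈ A := by
  rw [foldMap, add_eq_zero_iff_of_nonneg hy Metric.infDist_nonneg,
    ← hA.mem_iff_infDist_zero hne]

lemma foldMap_fst_mem_iff (hA : IsClosed A) (ha : a ∈ A) (hb : b ∈ A) (ht : t ∈ Icc a b)
    (hy : 0 ≤ y) : (foldMap A (t, y)).1 ∈ A ↔ t ∈ A := by
  refine ⟨fun hX ↦ by_contra fun htA ↦ ?_, fun htA ↦ by rwa [foldMap_of_mem htA]⟩
  obtain ⟨l, r, h, htlr⟩ := exists_isGap_of_notMem hA ha hb ht htA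
  exact h.notMem_of_mem_Ioo _ (h.foldMap_fst_mem_Ioo htlr hy) hX

lemma foldMap_fst_mem_Icc (hA : IsClosed A) (ha : a ∈ A) (hb : b ∈ A) (ht : t ∈ Icc a b)
    (hy : 0 ≤ y) : (foldMap A (t, y)).1 ∈ Icc a b := by
  by_cases htA : t ∈ A
  · rwa [foldMap_of_mem htA]
  obtain ⟨l, r, h, htlr⟩ := exists_isGap_of_notMem hA ha hb ht htA
  exact h.subset_Icc ha hb htlr ht (Ioo_subset_Icc_self (h.foldMap_fst_mem_Ioo htlr hy))

/-- The identifications of the boundary: `A` is collapsed to a point and every gap of `A` is folded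
at its midpoint. -/
def FoldRel (A : Set ℝ) (t t' : ℝ) : Prop :=
  (t ∈ A ∧ t' ∈ A) ∨ ∃ l r, IsGap A l r ∧ t ∈ Ioo l r ∧ t' = l + r - t

lemma IsGap.foldRel (h : IsGap A l r) (ht : t ∈ Icc l r) : FoldRel A t (l + r - t) := by
  rcases ht.1.eq_or_lt with rfl | hlt
  · exact Or.inl ⟨h.left_mem, by simpa using h.right_mem⟩
  rcases ht.2.eq_or_lt with rfl | htr
  · exact Or.inl ⟨h.right_mem, by simpa using h.left_mem⟩
  · exact Or.inr ⟨l, r, h, ⟨hlt, htr⟩, rfl⟩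

lemma eq_or_foldRel_of_foldMap_eq (hA : IsClosed A) (ha : a ∈ A) (hb : b ∈ A) (ht : t ∈ Icc a b)
    (ht' : t' ∈ Icc a b) (hy : 0 ≤ y) (hy' : 0 ≤ y')
    (heq : foldMap A (t, y) = foldMap A (t', y')) :
    (t = t' ∧ y = y') ∨ (y = 0 ∧ y' = 0 ∧ FoldRel A t t') := by
  have hmem : t ∈ A ↔ t' ∈ A := by
    rw [← foldMap_fst_mem_iff hA ha hb ht hy, heq, foldMap_fst_mem_iff hA ha hb ht' hy']
  by_cases htA : t ∈ A
  · rw [foldMap_of_mem htA, foldMap_of_mem (hmem.1 htA), Prod.mk.injEq] at heq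
    exact Or.inl heq
  obtain ⟨l, r, h, htlr⟩ := exists_isGap_of_notMem hA ha hb ht htA
  obtain ⟨l', r', h', htlr'⟩ := exists_isGap_of_notMem hA ha hb ht' (hmem.not.1 htA)
  obtain ⟨rfl, rfl⟩ := h.eq_of_mem_Ioo h' (h.foldMap_fst_mem_Ioo htlr hy)
    (heq ▸ h'.foldMap_fst_mem_Ioo htlr' hy')
  refine ((h.foldMap_eq_iff htlr htlr' hy hy').1 heq).imp_right fun ⟨h0, h0', hfold⟩ ↦
    ⟨h0, h0', Or.inr ⟨l, r, h, htlr, hfold⟩⟩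

lemma IsGap.foldMap_reflect (h : IsGap A l r) (ht : t ∈ Ioo l r) :
    foldMap A (l + r - t, 0) = foldMap A (t, 0) :=
  ((h.foldMap_eq_iff ht ⟨by linarith [ht.2], by linarith [ht.1]⟩ le_rfl le_rfl).2
    (Or.inr ⟨rfl, rfl, rfl⟩)).symm

lemma exists_foldMap_eq (hA : IsClosed A) (ha : a ∈ A) (hb : b ∈ A) (hX : X ∈ Icc a b)
    (hY : 0 < Y) : ∃ t ∈ Icc a b, ∃ y, 0 ≤ y ∧ foldMap A (t, y) = (X, Y) := by
  by_cases hXA : X ∈ A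
  · exact ⟨X, hX, Y, hY.le, foldMap_of_mem hXA Y⟩
  obtain ⟨l, r, h, hXlr⟩ := exists_isGap_of_notMem hA ha hb hX hXA
  obtain ⟨s, y, hy, hsub, hmul⟩ :=
    exists_abs_sub_eq_mul_eq ((r - l) / 2 - Y) ((X - (l + r) / 2) * Y)
  have hU : |X - (l + r) / 2| < (r - l) / 2 :=
    abs_lt.2 ⟨by linarith [hXlr.1], by linarith [hXlr.2]⟩
  have hs : |s| < (r - l) / 2 := by
    by_contra! hle
    have habs : |s| * y = |X - (l + r) / 2| * Y := by
      rw [← abs_of_nonneg hy, ← abs_mul, hmul, abs_mul, abs_of_pos hY]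
    have hle' := mul_le_mul hle (show Y ≤ y by linarith) hY.le (abs_nonneg s)
    linarith [mul_lt_mul_of_pos_right hU hY]
  have ht : (l + r) / 2 + s ∈ Ioo l r := by
    constructor <;> linarith [abs_lt.1 hs]
  have hsnd : (foldMap A ((l + r) / 2 + s, y)).2 = Y := by
    rw [h.foldMap_snd_eq ht, add_sub_cancel_left]
    linarith
  have hfst := h.foldMap_offset_mul ht hy
  rw [hsnd, add_sub_cancel_left, hmul] at hfst
  exact ⟨_, h.subset_Icc ha hb hXlr hX (Ioo_subset_Icc_self ht), y, hy,
    Prod.ext (sub_left_injective (mul_right_cancel₀ hY.ne' hfst)) hsnd⟩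

end Gaps

/-! ### Polar coordinates on the square -/

/-- Parametrization of the unit sphere of the sup norm on `ℝ × ℝ` by `t ∈ [-2, 2]`: it starts and
ends at `(-1, -1)`, passes through `(1, 1)` at `t = 0`, and is equivariant for the reflection in the
diagonal. -/
def squareLoop (t : ℝ) : ℝ × ℝ :=
  (max (-1) (min 1 (min (3 + 2 * t) (1 - 2 * t))), max (-1) (min 1 (min (3 - 2 * t) (1 + 2 * t))))

lemma continuous_squareLoop : Continuous squareLoop := by
  unfold squareLoop
  fun_prop

lemma squareLoop_neg (t : ℝ) : squareLoop (-t) = (squareLoop t).swap := by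
  simp [squareLoop, ← sub_eq_add_neg]

lemma squareLoop_of_mem_Icc_zero_one {t : ℝ} (ht : t ∈ Icc 0 1) :
    squareLoop t = (1 - 2 * t, 1) := by
  obtain ⟨h0, h1⟩ := ht
  rw [squareLoop, min_eq_right (by linarith : 1 - 2 * t ≤ 3 + 2 * t),
    min_eq_right (by linarith : 1 - 2 * t ≤ 1), max_eq_right (by linarith : -1 ≤ 1 - 2 * t),
    min_eq_left (le_min (by linarith) (by linarith)), max_eq_right (by norm_num)]

lemma squareLoop_of_mem_Icc_one_two {t : ℝ} (ht : t ∈ Icc 1 2) :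
    squareLoop t = (-1, 3 - 2 * t) := by
  obtain ⟨h1, h2⟩ := ht
  rw [squareLoop, min_eq_right (by linarith : 1 - 2 * t ≤ 3 + 2 * t),
    min_eq_right (by linarith : 1 - 2 * t ≤ 1), max_eq_left (by linarith : 1 - 2 * t ≤ -1),
    min_eq_left (by linarith : 3 - 2 * t ≤ 1 + 2 * t), min_eq_right (by linarith : 3 - 2 * t ≤ 1),
    max_eq_right (by linarith : -1 ≤ 3 - 2 * t)]

lemma norm_squareLoop {t : ℝ} (ht : t ∈ Icc (-2) 2) : ‖squareLoop t‖ = 1 := by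
  wlog h0 : 0 ≤ t generalizing t
  · have hneg := this (t := -t) ⟨by linarith [ht.2], by linarith [ht.1]⟩ (by linarith)
    rwa [squareLoop_neg, Prod.norm_def, Prod.fst_swap, Prod.snd_swap, max_comm] at hneg
  rcases le_total t 1 with h1 | h1
  · rw [squareLoop_of_mem_Icc_zero_one ⟨h0, h1⟩, Prod.norm_mk, norm_one, max_eq_right]
    exact abs_le.2 ⟨by linarith, by linarith⟩
  · rw [squareLoop_of_mem_Icc_one_two ⟨h1, ht.2⟩, Prod.norm_mk, norm_neg, norm_one, max_eq_left]
    exact abs_le.2 ⟨by linarith [ht.2], by linarith⟩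

lemma squareLoop_fst_add_snd {t : ℝ} (ht : t ∈ Icc (-2) 2) :
    (squareLoop t).1 + (squareLoop t).2 = 2 - 2 * |t| := by
  wlog h0 : 0 ≤ t generalizing t
  · have hneg := this (t := -t) ⟨by linarith [ht.2], by linarith [ht.1]⟩ (by linarith)
    rwa [squareLoop_neg, Prod.fst_swap, Prod.snd_swap, add_comm, abs_neg] at hneg
  rw [abs_of_nonneg h0]
  rcases le_total t 1 with h1 | h1
  · rw [squareLoop_of_mem_Icc_zero_one ⟨h0, h1⟩]
    ring
  · rw [squareLoop_of_mem_Icc_one_two ⟨h1, ht.2⟩]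
    ring

lemma squareLoop_neg_eq_iff {t : ℝ} (ht : t ∈ Icc (-2) 2) :
    squareLoop (-t) = squareLoop t ↔ t = 0 ∨ |t| = 2 := by
  wlog h0 : 0 ≤ t generalizing t
  · have hneg := this (t := -t) ⟨by linarith [ht.2], by linarith [ht.1]⟩ (by linarith)
    rwa [neg_neg, abs_neg, neg_eq_zero, eq_comm] at hneg
  rw [squareLoop_neg, abs_of_nonneg h0]
  rcases le_total t 1 with h1 | h1
  · rw [squareLoop_of_mem_Icc_zero_one ⟨h0, h1⟩, Prod.swap_prod_mk, Prod.mk.injEq]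
    grind
  · rw [squareLoop_of_mem_Icc_one_two ⟨h1, ht.2⟩, Prod.swap_prod_mk, Prod.mk.injEq]
    grind

lemma squareLoop_eq_iff {t t' : ℝ} (ht : t ∈ Icc (-2) 2) (ht' : t' ∈ Icc (-2) 2) :
    squareLoop t = squareLoop t' ↔ t = t' ∨ (|t| = 2 ∧ |t'| = 2) := by
  constructor
  · intro heq
    have habs : |t| = |t'| := by
      linarith [squareLoop_fst_add_snd ht, squareLoop_fst_add_snd ht',
        congrArg (fun p : ℝ × ℝ ↦ p.1 + p.2) heq]
    rcases abs_eq_abs.1 habs with rfl | rfl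
    · exact Or.inl rfl
    · rcases (squareLoop_neg_eq_iff ht').1 heq with rfl | h2
      · exact Or.inl neg_zero
      · exact Or.inr ⟨habs.trans h2, h2⟩
  · rintro (rfl | ⟨h2, h2'⟩)
    · rfl
    · rcases abs_eq_abs.1 (h2.trans h2'.symm) with rfl | rfl
      · rfl
      · exact (squareLoop_neg_eq_iff ht').2 (Or.inr h2')

lemma exists_squareLoop_eq {v : ℝ × ℝ} (hv : ‖v‖ = 1) : ∃ t ∈ Icc (-2) 2, squareLoop t = v := by
  wlog hle : v.1 ≤ v.2 generalizing v
  · obtain ⟨t, ht, htv⟩ := this (v := v.swap) (by rwa [Prod.norm_def, max_comm] at hv)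
      (le_of_not_ge hle)
    exact ⟨-t, ⟨by linarith [ht.2], by linarith [ht.1]⟩, by
      rw [squareLoop_neg, htv, Prod.swap_swap]⟩
  obtain ⟨x, y⟩ := v
  have hx := abs_le.1 ((norm_fst_le (x, y)).trans_eq hv)
  have hy := abs_le.1 ((norm_snd_le (x, y)).trans_eq hv)
  have hside : y = 1 ∨ x = -1 := by
    rw [Prod.norm_mk, Real.norm_eq_abs, Real.norm_eq_abs] at hv
    dsimp only at hle
    grind
  dsimp only at hx hy
  rcases hside with rfl | rfl
  · refine ⟨(1 - x) / 2, ⟨by linarith, by linarith⟩, ?_⟩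
    rw [squareLoop_of_mem_Icc_zero_one ⟨by linarith, by linarith⟩, mul_div_cancel₀ _ two_ne_zero,
      sub_sub_cancel]
  · refine ⟨(3 - y) / 2, ⟨by linarith, by linarith⟩, ?_⟩
    rw [squareLoop_of_mem_Icc_one_two ⟨by linarith, by linarith⟩, mul_div_cancel₀ _ two_ne_zero,
      sub_sub_cancel]

lemma exists_norm_smul_squareLoop_eq (v : ℝ × ℝ) :
    ∃ t ∈ Icc (-2) 2, ‖v‖ • squareLoop t = v := by
  rcases eq_or_ne v 0 with rfl | hv
  · exact ⟨0, by norm_num, by simp⟩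
  · obtain ⟨t, ht, htv⟩ := exists_squareLoop_eq (v := ‖v‖⁻¹ • v) (norm_smul_inv_norm hv)
    exact ⟨t, ht, by rw [htv, smul_inv_smul₀ (norm_ne_zero_iff.2 hv)]⟩

lemma smul_eq_smul_iff_of_norm_eq_one {E : Type*} [NormedAddCommGroup E] [NormedSpace ℝ E]
    {u u' : E} {c c' : ℝ} (hu : ‖u‖ = 1) (hu' : ‖u'‖ = 1) (hc : 0 ≤ c) (hc' : 0 ≤ c') :
    c • u = c' • u' ↔ c = c' ∧ (c = 0 ∨ u = u') := by
  constructor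
  · intro h
    obtain rfl : c = c' := by
      simpa [norm_smul, hu, hu', abs_of_nonneg, hc, hc'] using congrArg norm h
    exact ⟨rfl, or_iff_not_imp_left.2 fun h0 ↦ smul_right_injective E h0 h⟩
  · rintro ⟨rfl, rfl | rfl⟩ <;> simp

/-- The point of the unit square on the ray from the centre in the direction `squareLoop q.1`, at
the fraction `q.2` of the way to the boundary. -/
def polar (q : ℝ × ℝ) : ℝ × ℝ := (1 / 2, 1 / 2) + (q.2 / 2) • squareLoop q.1

/-- The rectangle of polar coordinates on the square. -/
abbrev polarRect : Set (ℝ × ℝ) := Icc (-2) 2 ×ˢ Icc 0 1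

lemma continuous_polar : Continuous polar := by
  have := continuous_squareLoop
  unfold polar
  fun_prop

lemma closedBall_eq_Sq : Metric.closedBall ((1 / 2, 1 / 2) : ℝ × ℝ) (1 / 2) = Sq := by
  rw [← closedBall_prod_same, Real.closedBall_eq_Icc, Sq]
  norm_num

lemma image_polar_polarRect : polar '' polarRect = Sq := by
  rw [← closedBall_eq_Sq]
  ext p
  constructor
  · rintro ⟨⟨t, ρ⟩, ⟨ht, hρ⟩, rfl⟩
    rw [Metric.mem_closedBall, dist_eq_norm, polar, add_sub_cancel_left, norm_smul,
      norm_squareLoop ht, mul_one, Real.norm_of_nonneg (div_nonneg hρ.1 zero_le_two)]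
    exact div_le_div_of_nonneg_right hρ.2 zero_le_two
  · intro hp
    obtain ⟨t, ht, htp⟩ := exists_norm_smul_squareLoop_eq (p - (1 / 2, 1 / 2))
    refine ⟨(t, 2 * ‖p - (1 / 2, 1 / 2)‖), ⟨ht, by positivity, ?_⟩, ?_⟩
    · rw [Metric.mem_closedBall, dist_eq_norm] at hp
      linarith
    · rw [polar, mul_div_cancel_left₀ _ two_ne_zero, htp, add_sub_cancel]

lemma polar_eq_iff {q q' : ℝ × ℝ} (hq : q ∈ polarRect) (hq' : q' ∈ polarRect) :
    polar q = polar q' ↔ q.2 = q'.2 ∧ (q.2 = 0 ∨ squareLoop q.1 = squareLoop q'.1) := by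
  rw [polar, polar, add_right_inj, smul_eq_smul_iff_of_norm_eq_one (norm_squareLoop hq.1)
    (norm_squareLoop hq'.1) (div_nonneg hq.2.1 zero_le_two) (div_nonneg hq'.2.1 zero_le_two),
    div_left_inj' two_ne_zero, div_eq_zero_iff, or_iff_left two_ne_zero]

/-! ### The folded square as a one-point compactification -/

lemma continuousOn_ite_infty {X E : Type*} [TopologicalSpace X] [TopologicalSpace E]
    {s : Set X} {p : X → Prop} [DecidablePred p] {g : X → E}
    (hp : ∀ x ∈ s, ¬p x → ∀ᶠ z in 𝓝[s] x, ¬p z)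
    (hg : ∀ x ∈ s, ¬p x → ContinuousWithinAt g s x)
    (hinfty : ∀ x ∈ s, p x → Tendsto g (𝓝[s ∩ {z | ¬p z}] x) (coclosedCompact E)) :
    ContinuousOn (fun x ↦ if p x then OnePoint.infty else (g x : OnePoint E)) s := by
  intro x hx
  by_cases hpx : p x
  · rw [ContinuousWithinAt, if_pos hpx]
    refine tendsto_const_nhds.if ?_
    rw [← nhdsWithin_inter']
    exact OnePoint.tendsto_coe_infty.comp (hinfty x hx hpx)
  · have hcoe : ContinuousWithinAt (fun x ↦ (g x : OnePoint E)) s x :=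
      OnePoint.continuous_coe.continuousAt.comp_continuousWithinAt (hg x hx hpx)
    refine hcoe.congr_of_eventuallyEq ?_ (if_neg hpx)
    filter_upwards [hp x hx hpx] with z hz using if_neg hz

/-- The point at height `p.2` above the parameter `p.1`, placed in the direction `squareLoop p.1` at
distance `p.2⁻¹` from the origin; height `0` is the point at infinity. -/
def inversePolar (p : ℝ × ℝ) : OnePoint (ℝ × ℝ) :=
  if p.2 = 0 then OnePoint.infty else ↑(p.2⁻¹ • squareLoop p.1)

lemma inversePolar_ne_zero {p : ℝ × ℝ} (hp : p.1 ∈ Icc (-2) 2) :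
    inversePolar p ≠ ((0 : ℝ × ℝ) : OnePoint (ℝ × ℝ)) := by
  unfold inversePolar
  split_ifs with h
  · exact OnePoint.infty_ne_coe _
  · have hloop : squareLoop p.1 ≠ 0 := norm_ne_zero_iff.1 (by simp [norm_squareLoop hp])
    simpa [h] using hloop

lemma inversePolar_eq_iff {p p' : ℝ × ℝ} (hp : p ∈ Icc (-2) 2 ×ˢ Ici 0)
    (hp' : p' ∈ Icc (-2) 2 ×ˢ Ici 0) : inversePolar p = inversePolar p' ↔
      p.2 = p'.2 ∧ (p.2 = 0 ∨ squareLoop p.1 = squareLoop p'.1) := by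
  unfold inversePolar
  split_ifs with h h' h'
  · simp [h, h']
  · simp [h, Ne.symm h']
  · simp [h, h']
  · rw [OnePoint.coe_eq_coe, smul_eq_smul_iff_of_norm_eq_one (norm_squareLoop hp.1)
      (norm_squareLoop hp'.1) (inv_nonneg.2 hp.2) (inv_nonneg.2 hp'.2), inv_inj, inv_eq_zero]

/-- The denominator of `foldRadius`. -/
def foldDenom (A : Set ℝ) (q : ℝ × ℝ) : ℝ := 1 - q.2 + q.2 * Metric.infDist q.1 A

/-- The inverse of the height of `foldMap A` at `(t, ρ⁻¹ - 1)`, where `q = (t, ρ)`, in a form that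
makes sense for `ρ = 0`. -/
def foldRadius (A : Set ℝ) (q : ℝ × ℝ) : ℝ := q.2 / foldDenom A q

/-- The vector of norm `foldRadius A q` in the direction given by the first coordinate of
`foldMap A` at `(t, ρ⁻¹ - 1)`, where `q = (t, ρ)`. -/
def foldVector (A : Set ℝ) (q : ℝ × ℝ) : ℝ × ℝ :=
  foldRadius A q • squareLoop (q.1 - foldRadius A q * foldShift A q.1)

/-- The realization of the folded square in the one-point compactification of the plane, in polar
coordinates `q = (t, ρ)`: the map `foldMap A` in the coordinates `(t, ρ⁻¹ - 1)`, followed by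
`inversePolar`. -/
def toOnePoint (A : Set ℝ) (q : ℝ × ℝ) : OnePoint (ℝ × ℝ) :=
  if foldDenom A q = 0 then OnePoint.infty else ↑(foldVector A q)

section ToOnePoint

variable {A : Set ℝ} {t ρ : ℝ} {q q' : ℝ × ℝ}

lemma foldDenom_nonneg (hq : q.2 ∈ Icc 0 1) : 0 ≤ foldDenom A q :=
  add_nonneg (sub_nonneg.2 hq.2) (mul_nonneg hq.1 Metric.infDist_nonneg)

lemma eq_one_of_foldDenom_eq_zero (hq : q.2 ∈ Icc 0 1) (h : foldDenom A q = 0) : q.2 = 1 := by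
  rw [foldDenom, add_eq_zero_iff_of_nonneg (sub_nonneg.2 hq.2)
    (mul_nonneg hq.1 Metric.infDist_nonneg)] at h
  linarith [h.1]

lemma continuous_foldDenom : Continuous (foldDenom A) := by
  have : Continuous fun q : ℝ × ℝ ↦ Metric.infDist q.1 A :=
    (Metric.continuous_infDist_pt A).comp continuous_fst
  unfold foldDenom
  fun_prop

lemma foldMap_inv_sub_one (hρ : 0 < ρ) : foldMap A (t, ρ⁻¹ - 1) =
    (t - foldRadius A (t, ρ) * foldShift A t, (foldRadius A (t, ρ))⁻¹) := by
  have hheight : ρ⁻¹ - 1 + Metric.infDist t A = (foldRadius A (t, ρ))⁻¹ := by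
    rw [foldRadius, foldDenom, inv_div]
    field_simp
  rw [foldMap, hheight, div_inv_eq_mul, mul_comm]

lemma toOnePoint_of_pos (hρ : 0 < ρ) :
    toOnePoint A (t, ρ) = inversePolar (foldMap A (t, ρ⁻¹ - 1)) := by
  rw [foldMap_inv_sub_one hρ]
  simp [toOnePoint, foldVector, inversePolar, foldRadius, hρ.ne']

lemma toOnePoint_zero (t : ℝ) : toOnePoint A (t, 0) = ((0 : ℝ × ℝ) : OnePoint (ℝ × ℝ)) := by
  simp [toOnePoint, foldVector, foldRadius, foldDenom]

lemma toOnePoint_of_mem (ht : t ∈ A) : toOnePoint A (t, 1) = OnePoint.infty := by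
  simp [toOnePoint, foldDenom, Metric.infDist_zero_of_mem ht]

lemma mem_of_abs_eq_two (h2 : 2 ∈ A) (hn2 : -2 ∈ A) (ht : |t| = 2) : t ∈ A := by
  rcases eq_or_eq_neg_of_abs_eq ht with rfl | rfl <;> assumption

variable (hA : IsClosed A) (h2 : 2 ∈ A) (hn2 : -2 ∈ A)
include hA h2 hn2

lemma foldMap_mem (hq : q ∈ polarRect) (hpos : 0 < q.2) :
    foldMap A (q.1, q.2⁻¹ - 1) ∈ Icc (-2) 2 ×ˢ Ici 0 := by
  have hheight : 0 ≤ q.2⁻¹ - 1 := sub_nonneg.2 ((one_le_inv₀ hpos).2 hq.2.2)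
  exact ⟨foldMap_fst_mem_Icc hA hn2 h2 hq.1 hheight, foldMap_snd_nonneg hheight⟩

lemma toOnePoint_eq_zero_iff (hq : q ∈ polarRect) :
    toOnePoint A q = ((0 : ℝ × ℝ) : OnePoint (ℝ × ℝ)) ↔ q.2 = 0 := by
  obtain ⟨t, ρ⟩ := q
  refine ⟨fun h ↦ ?_, fun h ↦ ?_⟩
  · by_contra h0
    have hpos : 0 < ρ := hq.2.1.lt_of_ne' h0
    rw [toOnePoint_of_pos hpos] at h
    exact inversePolar_ne_zero (foldMap_mem hA h2 hn2 hq hpos).1 h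
  · obtain rfl : ρ = 0 := h
    exact toOnePoint_zero t

lemma norm_foldVector (hq : q ∈ polarRect) : ‖foldVector A q‖ = foldRadius A q := by
  have hmem : q.1 - foldRadius A q * foldShift A q.1 ∈ Icc (-2) 2 := by
    rcases hq.2.1.eq_or_lt with h0 | hpos
    · simpa [foldRadius, ← h0] using hq.1
    · simpa only [foldMap_inv_sub_one hpos] using (foldMap_mem hA h2 hn2 hq hpos).1
  rw [foldVector, norm_smul, norm_squareLoop hmem, mul_one,
    foldRadius, Real.norm_of_nonneg (div_nonneg hq.2.1 (foldDenom_nonneg hq.2))]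

lemma tendsto_foldVector (hq : q ∈ polarRect) (h0 : foldDenom A q = 0) :
    Tendsto (foldVector A) (𝓝[polarRect ∩ {z | ¬foldDenom A z = 0}] q)
      (coclosedCompact (ℝ × ℝ)) := by
  rw [coclosedCompact_eq_cocompact, ← Metric.cobounded_eq_cocompact,
    ← tendsto_norm_atTop_iff_cobounded]
  have hdenom : Tendsto (foldDenom A) (𝓝[polarRect ∩ {z | ¬foldDenom A z = 0}] q) (𝓝[>] 0) := by
    refine tendsto_nhdsWithin_iff.2 ⟨?_, ?_⟩
    · exact h0 ▸ continuous_foldDenom.continuousWithinAt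
    · filter_upwards [self_mem_nhdsWithin] with z hz
      exact (foldDenom_nonneg hz.1.2).lt_of_ne' hz.2
  have hradius : Tendsto (foldRadius A) (𝓝[polarRect ∩ {z | ¬foldDenom A z = 0}] q) atTop := by
    have hsnd := continuous_snd.continuousWithinAt (x := q)
      (s := polarRect ∩ {z | ¬foldDenom A z = 0})
    rw [ContinuousWithinAt, eq_one_of_foldDenom_eq_zero hq.2 h0] at hsnd
    exact hsnd.pos_mul_atTop one_pos (tendsto_inv_nhdsGT_zero.comp hdenom)
  refine hradius.congr' ?_
  filter_upwards [self_mem_nhdsWithin] with z hz using (norm_foldVector hA h2 hn2 hz.1).symm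

lemma continuousOn_toOnePoint : ContinuousOn (toOnePoint A) polarRect := by
  refine continuousOn_ite_infty (fun q _ h0 ↦ ?_) (fun q hq h0 ↦ ?_)
    fun q hq h0 ↦ tendsto_foldVector hA h2 hn2 hq h0
  · exact continuous_foldDenom.continuousWithinAt.eventually_ne h0
  · have hradius : ContinuousWithinAt (foldRadius A) polarRect q :=
      continuous_snd.continuousWithinAt.div continuous_foldDenom.continuousWithinAt h0
    have hshift : ContinuousWithinAt (fun q : ℝ × ℝ ↦ foldShift A q.1) polarRect q :=
      (continuousOn_foldShift hA hn2 h2).comp continuousOn_fst (fun q hq ↦ hq.1) q hq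
    exact hradius.smul (continuous_squareLoop.continuousAt.comp_continuousWithinAt
      (continuous_fst.continuousWithinAt.sub (hradius.mul hshift)))

lemma surjOn_toOnePoint : SurjOn (toOnePoint A) polarRect univ := by
  intro z _
  induction z using OnePoint.rec with
  | infty => exact ⟨(2, 1), by norm_num [polarRect], toOnePoint_of_mem h2⟩
  | coe v =>
    rcases eq_or_ne v 0 with rfl | hv
    · exact ⟨(0, 0), by norm_num [polarRect], toOnePoint_zero 0⟩
    have hnorm : 0 < ‖v‖ := norm_pos_iff.2 hv
    obtain ⟨X, hX, hXv⟩ := exists_norm_smul_squareLoop_eq v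
    obtain ⟨t, ht, y, hy, hty⟩ := exists_foldMap_eq hA hn2 h2 hX (inv_pos.2 hnorm)
    have hpos : 0 < 1 + y := by positivity
    refine ⟨(t, (1 + y)⁻¹), ⟨ht, by positivity, inv_le_one_of_one_le₀ (by linarith)⟩, ?_⟩
    rw [toOnePoint_of_pos (inv_pos.2 hpos), inv_inv, add_sub_cancel_left, hty, inversePolar,
      if_neg (inv_pos.2 hnorm).ne', inv_inv, hXv]

lemma inversePolar_foldMap_eq_iff {t t' y y' : ℝ} (ht : t ∈ Icc (-2) 2) (ht' : t' ∈ Icc (-2) 2)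
    (hy : 0 ≤ y) (hy' : 0 ≤ y') :
    inversePolar (foldMap A (t, y)) = inversePolar (foldMap A (t', y')) ↔
      (y = y' ∧ squareLoop t = squareLoop t') ∨ (y = 0 ∧ y' = 0 ∧ FoldRel A t t') := by
  have hX := foldMap_fst_mem_Icc hA hn2 h2 ht hy
  have hX' := foldMap_fst_mem_Icc hA hn2 h2 ht' hy'
  constructor
  · intro h
    obtain ⟨hY, h0 | hloop⟩ := (inversePolar_eq_iff ⟨hX, foldMap_snd_nonneg hy⟩
      ⟨hX', foldMap_snd_nonneg hy'⟩).1 h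
    · obtain ⟨hy0, htA⟩ := (foldMap_snd_eq_zero_iff hA ⟨2, h2⟩ hy).1 h0
      obtain ⟨hy0', htA'⟩ := (foldMap_snd_eq_zero_iff hA ⟨2, h2⟩ hy').1 (hY ▸ h0)
      exact Or.inr ⟨hy0, hy0', Or.inl ⟨htA, htA'⟩⟩
    rcases (squareLoop_eq_iff hX hX').1 hloop with hXX' | ⟨hX2, hX2'⟩
    · refine (eq_or_foldRel_of_foldMap_eq hA hn2 h2 ht ht' hy hy' (Prod.ext hXX' hY)).imp_left ?_
      exact fun ⟨htt', hyy'⟩ ↦ ⟨hyy', congrArg squareLoop htt'⟩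
    · have htA := (foldMap_fst_mem_iff hA hn2 h2 ht hy).1 (mem_of_abs_eq_two h2 hn2 hX2)
      have htA' := (foldMap_fst_mem_iff hA hn2 h2 ht' hy').1 (mem_of_abs_eq_two h2 hn2 hX2')
      rw [foldMap_of_mem htA, foldMap_of_mem htA'] at hY hloop
      exact Or.inl ⟨hY, hloop⟩
  · rintro (⟨rfl, hloop⟩ | ⟨rfl, rfl, ⟨htA, htA'⟩ | ⟨l, r, h, htlr, rfl⟩⟩)
    · rcases (squareLoop_eq_iff ht ht').1 hloop with rfl | ⟨ht2, ht2'⟩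
      · rfl
      · rw [foldMap_of_mem (mem_of_abs_eq_two h2 hn2 ht2),
          foldMap_of_mem (mem_of_abs_eq_two h2 hn2 ht2'), inversePolar, inversePolar, hloop]
    · simp [foldMap_of_mem htA, foldMap_of_mem htA', inversePolar]
    · rw [h.foldMap_reflect htlr]

lemma toOnePoint_eq_iff (hq : q ∈ polarRect) (hq' : q' ∈ polarRect) :
    toOnePoint A q = toOnePoint A q' ↔
      polar q = polar q' ∨ (q.2 = 1 ∧ q'.2 = 1 ∧ FoldRel A q.1 q'.1) := by
  rw [polar_eq_iff hq hq']
  rcases hq.2.1.eq_or_lt with h0 | hpos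
  · rw [(toOnePoint_eq_zero_iff hA h2 hn2 hq).2 h0.symm, eq_comm,
      toOnePoint_eq_zero_iff hA h2 hn2 hq', ← h0]
    simp [eq_comm]
  rcases hq'.2.1.eq_or_lt with h0' | hpos'
  · rw [(toOnePoint_eq_zero_iff hA h2 hn2 hq').2 h0'.symm, toOnePoint_eq_zero_iff hA h2 hn2 hq,
      ← h0']
    simp [hpos.ne']
  rw [toOnePoint_of_pos hpos, toOnePoint_of_pos hpos', inversePolar_foldMap_eq_iff hA h2 hn2 hq.1
    hq'.1 (sub_nonneg.2 ((one_le_inv₀ hpos).2 hq.2.2))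
    (sub_nonneg.2 ((one_le_inv₀ hpos').2 hq'.2.2)), sub_left_inj, inv_inj, sub_eq_zero,
    sub_eq_zero, inv_eq_one, inv_eq_one, or_iff_right hpos.ne']

end ToOnePoint

/-! ### The identifications on the boundary of the square -/

/-- The parameters `t ∈ [-2, 2]` of the points `polar (t, 1)` of `Efold`. -/
def foldSet : Set ℝ := (fun t ↦ 2 - |t|) ⁻¹' insert 0 (range fun n : ℕ ↦ 2 * (1 / 2) ^ n)

lemma isClosed_foldSet : IsClosed foldSet := by
  have hlim : Tendsto (fun n : ℕ ↦ (2 : ℝ) * (1 / 2) ^ n) atTop (𝓝 0) := by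
    simpa using (tendsto_pow_atTop_nhds_zero_of_lt_one (r := (1 / 2 : ℝ)) (by norm_num)
      (by norm_num)).const_mul 2
  exact hlim.isCompact_insert_range.isClosed.preimage (by fun_prop)

lemma neg_mem_foldSet_iff {t : ℝ} : -t ∈ foldSet ↔ t ∈ foldSet := by
  simp only [foldSet, mem_preimage, abs_neg]

lemma mem_foldSet_iff_of_nonneg {t : ℝ} (ht : 0 ≤ t) :
    t ∈ foldSet ↔ t = 2 ∨ t = 0 ∨ ∃ i : ℕ, t = 2 - (1 / 2) ^ i := by
  have hpow : (∃ n : ℕ, 2 * (1 / 2) ^ n = 2 - t) ↔ t = 0 ∨ ∃ i : ℕ, t = 2 - (1 / 2) ^ i := by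
    rw [← Nat.or_exists_add_one]
    simp only [pow_succ]
    refine or_congr ⟨fun h ↦ ?_, fun h ↦ ?_⟩ (exists_congr fun i ↦ ⟨fun h ↦ ?_, fun h ↦ ?_⟩) <;>
      linarith
  rw [foldSet, mem_preimage, mem_insert_iff, mem_range, abs_of_nonneg ht, hpow, sub_eq_zero,
    eq_comm]

lemma two_mem_foldSet : 2 ∈ foldSet := (mem_foldSet_iff_of_nonneg zero_le_two).2 (Or.inl rfl)

lemma neg_two_mem_foldSet : -2 ∈ foldSet := neg_mem_foldSet_iff.2 two_mem_foldSet

lemma half_pow_le_one (n : ℕ) : (1 / 2 : ℝ) ^ n ≤ 1 := pow_le_one₀ (by norm_num) (by norm_num)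

lemma isGap_foldSet (n : ℕ) : IsGap foldSet (2 - 2 * (1 / 2) ^ n) (2 - (1 / 2) ^ n) where
  left_mem := by
    have h0 : 0 ≤ 2 - 2 * (1 / 2 : ℝ) ^ n := by linarith [half_pow_le_one n]
    exact Or.inr ⟨n, by dsimp only; rw [abs_of_nonneg h0, sub_sub_cancel]⟩
  right_mem := by
    have h0 : 0 ≤ 2 - (1 / 2 : ℝ) ^ n := by linarith [half_pow_le_one n]
    exact (mem_foldSet_iff_of_nonneg h0).2 (Or.inr (Or.inr ⟨n, rfl⟩))
  lt := by
    have : (0 : ℝ) < (1 / 2) ^ n := by positivity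
    linarith
  notMem_of_mem_Ioo := by
    rintro t ⟨hl, hr⟩ (h | ⟨m, h⟩) <;> dsimp only at h <;>
      rw [abs_of_nonneg (by linarith [half_pow_le_one n])] at h
    · linarith [pow_pos (one_half_pos (α := ℝ)) n]
    · rcases le_or_gt m n with hmn | hmn
      · linarith [pow_le_pow_of_le_one (one_half_pos (α := ℝ)).le (by norm_num) hmn]
      · have hle := pow_le_pow_of_le_one (one_half_pos (α := ℝ)).le (by norm_num) hmn
        rw [Nat.succ_eq_add_one, pow_succ] at hle
        linarith

lemma exists_mem_Ioo_of_notMem_foldSet {t : ℝ} (h0 : 0 ≤ t) (h2 : t ≤ 2) (ht : t ∉ foldSet) :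
    ∃ n : ℕ, t ∈ Ioo (2 - 2 * (1 / 2) ^ n) (2 - (1 / 2) ^ n) := by
  have hlt : t < 2 := h2.lt_of_ne fun h ↦ ht (h ▸ two_mem_foldSet)
  obtain ⟨n, hn, hn'⟩ := exists_nat_pow_near_of_lt_one (x := (2 - t) / 2) (y := 1 / 2)
    (by linarith) (by linarith) one_half_pos one_half_lt_one
  refine ⟨n, lt_of_le_of_ne (by linarith) fun h ↦ ht (h ▸ (isGap_foldSet n).left_mem), ?_⟩
  rw [pow_succ] at hn
  linarith

lemma IsGap.neg_foldSet {l r : ℝ} (h : IsGap foldSet l r) : IsGap foldSet (-r) (-l) where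
  left_mem := neg_mem_foldSet_iff.2 h.right_mem
  right_mem := neg_mem_foldSet_iff.2 h.left_mem
  lt := neg_lt_neg h.lt
  notMem_of_mem_Ioo x hx := fun hxA ↦
    h.notMem_of_mem_Ioo (-x) ⟨lt_neg.1 hx.2, neg_lt.1 hx.1⟩ (neg_mem_foldSet_iff.2 hxA)

lemma FoldRel.neg_foldSet {t t' : ℝ} (h : FoldRel foldSet t t') : FoldRel foldSet (-t) (-t') := by
  obtain ⟨ht, ht'⟩ | ⟨l, r, hlr, ht, rfl⟩ := h
  · exact Or.inl ⟨neg_mem_foldSet_iff.2 ht, neg_mem_foldSet_iff.2 ht'⟩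
  · exact Or.inr ⟨-r, -l, hlr.neg_foldSet, ⟨neg_lt_neg ht.2, neg_lt_neg ht.1⟩, by ring⟩

lemma polar_one_of_mem_Icc_zero_one {t : ℝ} (ht : t ∈ Icc 0 1) : polar (t, 1) = (1 - t, 1) := by
  rw [polar, squareLoop_of_mem_Icc_zero_one ht]
  refine Prod.ext ?_ ?_ <;> simp only [Prod.fst_add, Prod.snd_add, Prod.smul_mk, smul_eq_mul] <;>
    ring

lemma polar_one_of_mem_Icc_one_two {t : ℝ} (ht : t ∈ Icc 1 2) : polar (t, 1) = (0, 2 - t) := by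
  rw [polar, squareLoop_of_mem_Icc_one_two ht]
  refine Prod.ext ?_ ?_ <;> simp only [Prod.fst_add, Prod.snd_add, Prod.smul_mk, smul_eq_mul] <;>
    ring

lemma polar_neg (t ρ : ℝ) : polar (-t, ρ) = (polar (t, ρ)).swap := by
  simp [polar, squareLoop_neg, Prod.swap]

lemma two_zpow_neg (i : ℕ) : (2 : ℝ) ^ (-(i : ℤ)) = (1 / 2) ^ i := by
  rw [zpow_neg, zpow_natCast, one_div, inv_pow]

lemma two_zpow_neg_add_one (i : ℕ) : (2 : ℝ) ^ (-(i : ℤ) + 1) = 2 * (1 / 2) ^ i := by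
  rw [zpow_add_one₀ two_ne_zero, two_zpow_neg, mul_comm]

lemma swap_mem_Efold {p : ℝ × ℝ} (hp : p ∈ Efold) : p.swap ∈ Efold := by
  obtain ((rfl | rfl) | ⟨i, rfl⟩) | ⟨i, rfl⟩ := hp
  · exact Or.inl (Or.inl (Or.inl rfl))
  · exact Or.inl (Or.inl (Or.inr rfl))
  · exact Or.inr ⟨i, rfl⟩
  · exact Or.inl (Or.inr ⟨i, rfl⟩)

lemma polar_mem_Efold {t : ℝ} (ht : t ∈ Icc (-2) 2) (htA : t ∈ foldSet) : polar (t, 1) ∈ Efold := by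
  wlog h0 : 0 ≤ t generalizing t
  · have hneg := this (t := -t) ⟨by linarith [ht.2], by linarith [ht.1]⟩
      (neg_mem_foldSet_iff.2 htA) (by linarith)
    simpa [polar_neg] using swap_mem_Efold hneg
  rcases (mem_foldSet_iff_of_nonneg h0).1 htA with rfl | rfl | ⟨i, rfl⟩
  · rw [polar_one_of_mem_Icc_one_two (by norm_num), sub_self]
    exact Or.inl (Or.inl (Or.inl rfl))
  · rw [polar_one_of_mem_Icc_zero_one (by norm_num), sub_zero]
    exact Or.inl (Or.inl (Or.inr rfl))
  · rw [polar_one_of_mem_Icc_one_two ⟨by linarith [half_pow_le_one i], ht.2⟩, sub_sub_cancel]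
    exact Or.inl (Or.inr ⟨i, by rw [two_zpow_neg]⟩)

lemma exists_polar_eq_of_mem_Efold {p : ℝ × ℝ} (hp : p ∈ Efold) :
    ∃ t ∈ Icc (-2) 2, t ∈ foldSet ∧ polar (t, 1) = p := by
  have hcoord (i : ℕ) :
      ∃ t ∈ Icc (-2) 2, t ∈ foldSet ∧ polar (t, 1) = (0, (2 : ℝ) ^ (-(i : ℤ))) := by
    have hi := half_pow_le_one i
    have hi' : (0 : ℝ) < (1 / 2) ^ i := by positivity
    refine ⟨2 - (1 / 2) ^ i, ⟨by linarith, by linarith⟩, (isGap_foldSet i).right_mem, ?_⟩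
    rw [polar_one_of_mem_Icc_one_two ⟨by linarith, by linarith⟩, sub_sub_cancel, two_zpow_neg]
  obtain ((rfl | rfl) | ⟨i, rfl⟩) | ⟨i, rfl⟩ := hp
  · exact ⟨2, by norm_num, two_mem_foldSet, by
      rw [polar_one_of_mem_Icc_one_two (by norm_num), sub_self]⟩
  · exact ⟨0, by norm_num, (mem_foldSet_iff_of_nonneg le_rfl).2 (Or.inr (Or.inl rfl)), by
      rw [polar_one_of_mem_Icc_zero_one (by norm_num), sub_zero]⟩
  · exact hcoord i
  · obtain ⟨t, ht, htA, htp⟩ := hcoord i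
    exact ⟨-t, ⟨by linarith [ht.2], by linarith [ht.1]⟩, neg_mem_foldSet_iff.2 htA, by
      rw [polar_neg, htp, Prod.swap_prod_mk]⟩

lemma baseRel_swap {p p' : ℝ × ℝ} (h : baseRel p p') : baseRel p.swap p'.swap := by
  obtain ⟨x, hx, rfl, rfl⟩ | ⟨y, hy, rfl, rfl⟩ | ⟨i, hi, y, hy, rfl, rfl⟩ |
    ⟨i, hi, x, hx, rfl, rfl⟩ | ⟨hp, hp'⟩ := h
  · exact Or.inr (Or.inl ⟨x, hx, rfl, rfl⟩)
  · exact Or.inl ⟨y, hy, rfl, rfl⟩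
  · exact Or.inr (Or.inr (Or.inr (Or.inl ⟨i, hi, y, hy, rfl, rfl⟩)))
  · exact Or.inr (Or.inr (Or.inl ⟨i, hi, x, hx, rfl, rfl⟩))
  · exact Or.inr (Or.inr (Or.inr (Or.inr ⟨swap_mem_Efold hp, swap_mem_Efold hp'⟩)))

/-- The relation on the boundary of the square that corresponds to `FoldRel foldSet`. -/
def BoundaryRel (p p' : ℝ × ℝ) : Prop :=
  ∃ t ∈ Icc (-2) 2, ∃ t' ∈ Icc (-2) 2, FoldRel foldSet t t' ∧ polar (t, 1) = p ∧ polar (t', 1) = p'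

lemma BoundaryRel.swap {p p' : ℝ × ℝ} (h : BoundaryRel p p') : BoundaryRel p.swap p'.swap := by
  obtain ⟨t, ht, t', ht', hrel, rfl, rfl⟩ := h
  exact ⟨-t, ⟨by linarith [ht.2], by linarith [ht.1]⟩, -t',
    ⟨by linarith [ht'.2], by linarith [ht'.1]⟩, hrel.neg_foldSet, polar_neg t 1, polar_neg t' 1⟩

lemma boundaryRel_top {x : ℝ} (hx : x ∈ Icc 0 1) : BoundaryRel (x, 1) (1 - x, 1) := by
  obtain ⟨hx0, hx1⟩ := hx
  have hgap := (isGap_foldSet 0).foldRel (t := 1 - x) ⟨by linarith, by linarith⟩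
  refine ⟨1 - x, ⟨by linarith, by linarith⟩, x, ⟨by linarith, by linarith⟩, ?_, ?_, ?_⟩
  · convert hgap using 1
    ring
  · rw [polar_one_of_mem_Icc_zero_one ⟨by linarith, by linarith⟩, sub_sub_cancel]
  · rw [polar_one_of_mem_Icc_zero_one ⟨hx0, hx1⟩]

lemma boundaryRel_left {i : ℕ} (hi : 1 ≤ i) {y : ℝ} (hy : y ∈ Icc ((1 / 2) ^ i) (2 * (1 / 2) ^ i)) :
    BoundaryRel (0, y) (0, 3 * (1 / 2) ^ i - y) := by
  obtain ⟨hyl, hyr⟩ := hy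
  have hpos : (0 : ℝ) < (1 / 2) ^ i := by positivity
  have hhalf : (1 / 2 : ℝ) ^ i ≤ 1 / 2 := pow_le_of_le_one (by norm_num) (by norm_num) (by omega)
  have hgap := (isGap_foldSet i).foldRel (t := 2 - y) ⟨by linarith, by linarith⟩
  refine ⟨2 - y, ⟨by linarith, by linarith⟩, 2 - (3 * (1 / 2) ^ i - y),
    ⟨by linarith, by linarith⟩, ?_, ?_, ?_⟩
  · convert hgap using 1
    ring
  all_goals rw [polar_one_of_mem_Icc_one_two ⟨by linarith, by linarith⟩, sub_sub_cancel]

lemma boundaryRel_of_baseRel {p p' : ℝ × ℝ} (h : baseRel p p') : BoundaryRel p p' := by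
  simp only [baseRel, two_zpow_neg, two_zpow_neg_add_one] at h
  obtain ⟨x, hx, rfl, rfl⟩ | ⟨y, hy, rfl, rfl⟩ | ⟨i, hi, y, hy, rfl, rfl⟩ |
    ⟨i, hi, x, hx, rfl, rfl⟩ | ⟨hp, hp'⟩ := h
  · exact boundaryRel_top hx
  · exact (boundaryRel_top hy).swap
  · exact boundaryRel_left hi hy
  · exact (boundaryRel_left hi hx).swap
  · obtain ⟨t, ht, htA, rfl⟩ := exists_polar_eq_of_mem_Efold hp
    obtain ⟨t', ht', htA', rfl⟩ := exists_polar_eq_of_mem_Efold hp'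
    exact ⟨t, ht, t', ht', Or.inl ⟨htA, htA'⟩, rfl, rfl⟩

lemma baseRel_polar_of_mem_Ioo {n : ℕ} {t : ℝ}
    (ht : t ∈ Ioo (2 - 2 * (1 / 2) ^ n) (2 - (1 / 2) ^ n)) :
    baseRel (polar (t, 1)) (polar (2 - 2 * (1 / 2) ^ n + (2 - (1 / 2) ^ n) - t, 1)) := by
  obtain ⟨hl, hr⟩ := ht
  have hpos : (0 : ℝ) < (1 / 2) ^ n := by positivity
  rcases n.eq_zero_or_pos with rfl | hn
  · rw [pow_zero] at *
    rw [polar_one_of_mem_Icc_zero_one ⟨by linarith, by linarith⟩,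
      polar_one_of_mem_Icc_zero_one ⟨by linarith, by linarith⟩]
    exact Or.inl ⟨1 - t, ⟨by linarith, by linarith⟩, rfl, by ring_nf⟩
  · have hhalf : (1 / 2 : ℝ) ^ n ≤ 1 / 2 := pow_le_of_le_one (by norm_num) (by norm_num) hn.ne'
    rw [polar_one_of_mem_Icc_one_two ⟨by linarith, by linarith⟩,
      polar_one_of_mem_Icc_one_two ⟨by linarith, by linarith⟩]
    refine Or.inr (Or.inr (Or.inl ⟨n, hn, 2 - t, ?_, rfl, ?_⟩))
    · rw [two_zpow_neg, two_zpow_neg_add_one]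
      constructor <;> linarith
    · rw [two_zpow_neg]
      ring_nf

lemma baseRel_polar_of_foldRel {t t' : ℝ} (ht : t ∈ Icc (-2) 2) (ht' : t' ∈ Icc (-2) 2)
    (h : FoldRel foldSet t t') : baseRel (polar (t, 1)) (polar (t', 1)) := by
  wlog h0 : 0 ≤ t generalizing t t'
  · have hneg := this (t := -t) (t' := -t') ⟨by linarith [ht.2], by linarith [ht.1]⟩
      ⟨by linarith [ht'.2], by linarith [ht'.1]⟩ h.neg_foldSet (by linarith)
    simpa [polar_neg] using baseRel_swap hneg
  obtain ⟨htA, htA'⟩ | ⟨l, r, hlr, htlr, rfl⟩ := h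
  · exact Or.inr (Or.inr (Or.inr (Or.inr ⟨polar_mem_Efold ht htA, polar_mem_Efold ht' htA'⟩)))
  · obtain ⟨n, hn⟩ := exists_mem_Ioo_of_notMem_foldSet h0 ht.2 (hlr.notMem_of_mem_Ioo t htlr)
    obtain ⟨rfl, rfl⟩ := hlr.eq_of_mem_Ioo (isGap_foldSet n) htlr hn
    exact baseRel_polar_of_mem_Ioo hn

/-! ### The quotient -/

lemma nonempty_homeomorph_of_isQuotientMap {X Y Z : Type*} [TopologicalSpace X]
    [TopologicalSpace Y] [TopologicalSpace Z] {f : X → Y} {g : X → Z} (hf : IsQuotientMap f)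
    (hg : IsQuotientMap g) (h : ∀ a b, f a = f b ↔ g a = g b) : Nonempty (Y ≃ₜ Z) := by
  have hker : Setoid.ker f = Setoid.ker g := Setoid.ext h
  have eg : Quotient (Setoid.ker g) ≃ₜ Z := IsQuotientMap.homeomorph (f := ⟨g, hg.continuous⟩) hg
  rw [← hker] at eg
  have ef : Quotient (Setoid.ker f) ≃ₜ Y := IsQuotientMap.homeomorph (f := ⟨f, hf.continuous⟩) hf
  exact ⟨ef.symm.trans eg⟩

lemma isQuotientMap_polar :
    IsQuotientMap (MapsTo.restrict polar polarRect Sq (mapsTo_iff_image_subset.2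
      image_polar_polarRect.subset)) := by
  have : CompactSpace polarRect := isCompact_iff_compactSpace.1 (isCompact_Icc.prod isCompact_Icc)
  have hcont := continuous_polar.restrict (mapsTo_iff_image_subset.2 image_polar_polarRect.subset)
  refine hcont.isClosedMap.isQuotientMap hcont ?_
  exact (MapsTo.restrict_surjective_iff _).2 image_polar_polarRect.superset

lemma isQuotientMap_toOnePoint :
    IsQuotientMap (polarRect.domRestrict (toOnePoint foldSet)) := by
  have : CompactSpace polarRect := isCompact_iff_compactSpace.1 (isCompact_Icc.prod isCompact_Icc)
  have hcont := continuousOn_iff_continuous_domRestrict.1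
    (continuousOn_toOnePoint isClosed_foldSet two_mem_foldSet neg_two_mem_foldSet)
  exact hcont.isClosedMap.isQuotientMap hcont <| surjOn_iff_surjective.1 <|
    surjOn_toOnePoint isClosed_foldSet two_mem_foldSet neg_two_mem_foldSet

lemma toOnePoint_foldSet_eq_iff {q q' : ℝ × ℝ} (hq : q ∈ polarRect) (hq' : q' ∈ polarRect) :
    toOnePoint foldSet q = toOnePoint foldSet q' ↔
      polar q = polar q' ∨ (q.2 = 1 ∧ q'.2 = 1 ∧ FoldRel foldSet q.1 q'.1) :=
  toOnePoint_eq_iff isClosed_foldSet two_mem_foldSet neg_two_mem_foldSet hq hq'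

/-- The map from the unit square to the sphere induced by `toOnePoint foldSet`. Its value outside of
the square is irrelevant. -/
def squareToOnePoint : ℝ × ℝ → OnePoint (ℝ × ℝ) :=
  Function.extend (polarRect.domRestrict polar) (polarRect.domRestrict (toOnePoint foldSet))
    fun _ ↦ OnePoint.infty

lemma squareToOnePoint_polar {q : ℝ × ℝ} (hq : q ∈ polarRect) :
    squareToOnePoint (polar q) = toOnePoint foldSet q := by
  have hfactor : (polarRect.domRestrict (toOnePoint foldSet)).FactorsThrough
      (polarRect.domRestrict polar) :=
    fun a b hab ↦ (toOnePoint_foldSet_eq_iff a.2 b.2).2 (Or.inl hab)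
  exact hfactor.extend_apply _ ⟨q, hq⟩

lemma squareToOnePoint_eq_of_hsRel {p p' : ℝ × ℝ} (h : hsRel p p') :
    squareToOnePoint p = squareToOnePoint p' := by
  induction h with
  | rel p p' h =>
    obtain ⟨t, ht, t', ht', hrel, rfl, rfl⟩ := boundaryRel_of_baseRel h
    have hq : (t, (1 : ℝ)) ∈ polarRect := ⟨ht, by norm_num⟩
    have hq' : (t', (1 : ℝ)) ∈ polarRect := ⟨ht', by norm_num⟩
    rw [squareToOnePoint_polar hq, squareToOnePoint_polar hq', toOnePoint_foldSet_eq_iff hq hq']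
    exact Or.inr ⟨rfl, rfl, hrel⟩
  | refl => rfl
  | symm _ _ _ ih => exact ih.symm
  | trans _ _ _ _ _ ih ih' => exact ih.trans ih'

lemma hsRel_polar_iff {q q' : ℝ × ℝ} (hq : q ∈ polarRect) (hq' : q' ∈ polarRect) :
    hsRel (polar q) (polar q') ↔ toOnePoint foldSet q = toOnePoint foldSet q' := by
  constructor
  · intro h
    rw [← squareToOnePoint_polar hq, ← squareToOnePoint_polar hq', squareToOnePoint_eq_of_hsRel h]
  · obtain ⟨t, ρ⟩ := q
    obtain ⟨t', ρ'⟩ := q'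
    rw [toOnePoint_foldSet_eq_iff hq hq']
    rintro (h | ⟨rfl, rfl, h⟩)
    · exact h ▸ Relation.EqvGen.refl _
    · exact Relation.EqvGen.rel _ _ (baseRel_polar_of_foldRel hq.1 hq'.1 h)

lemma nonempty_homeomorph_onePoint : Nonempty (HS ≃ₜ OnePoint (ℝ × ℝ)) := by
  have hquot : IsQuotientMap hsPi := isQuotientMap_quot_mk
  refine nonempty_homeomorph_of_isQuotientMap (hquot.comp isQuotientMap_polar)
    isQuotientMap_toOnePoint fun a b ↦ ?_
  exact Quotient.eq.trans (hsRel_polar_iff a.2 b.2)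

end FoldedSquare

end

/-- The quotient space `S = Σ/∼` is homeomorphic to the 2-sphere
(the unit sphere in 3-dimensional Euclidean space). -/
theorem HS_homeomorphic_to_sphere :
    Nonempty (HS ≃ₜ Metric.sphere (0 : EuclideanSpace ℝ (Fin 3)) 1) := by
  obtain ⟨e⟩ := FoldedSquare.nonempty_homeomorph_onePoint
  exact ⟨e.trans (onePointEquivSphereOfFinrankEq (ι := Fin 3) (V := ℝ × ℝ) (by simp))⟩
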